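/- Let C be a binary linear code of length N with weight distribution A(w), used over the binary erasure channel, and let ε* ∈ (0,1) satisfy P_MAP(ε*) = 1/2. Then for every integer 1 ≤ W ≤ N and every 0 < ε < ε*: P_MAP(ε) ≤ Φ(√W·(√(−ln ε*) − √(−ln ε))) + 2·√(−ln ε)·√W·A(W, ε*). -/

import Mathlib

open scoped Classical
open Finset

noncomputable section

/-- Erasure patterns and codewords: vectors in 𝔽₂^N. -/
abbrev Pattern (N : ℕ) := Fin N → ZMod 2

/-- Hamming weight. -/
def wH {N : ℕ} (x : Pattern N) : ℕ := hammingNorm x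

/-- `ω` covers `x` if the support of `x` is contained in the support of `ω`. -/
def covers {N : ℕ} (ω x : Pattern N) : Prop := ∀ i, x i ≠ 0 → ω i ≠ 0

/-- Product Bernoulli(ε) measure of a set of patterns. -/
def muE {N : ℕ} (ε : ℝ) (S : Finset (Pattern N)) : ℝ :=
  ∑ ω ∈ S, ε ^ wH ω * (1 - ε) ^ (N - wH ω)

/-- Erasure patterns causing a block-MAP error over the BEC. -/
def errBEC {N : ℕ} (C : Submodule (ZMod 2) (Pattern N)) : Finset (Pattern N) :=
  univ.filter (fun ω => ∃ x ∈ C, x ≠ 0 ∧ covers ω x)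

/-- Block-MAP error probability over BEC(ε). -/
def Pmap {N : ℕ} (C : Submodule (ZMod 2) (Pattern N)) (ε : ℝ) : ℝ :=
  muE ε (errBEC C)

/-- Weight distribution A(w) of the code. -/
def Aw {N : ℕ} (C : Submodule (ZMod 2) (Pattern N)) (w : ℕ) : ℕ :=
  (univ.filter (fun x : Pattern N => x ∈ C ∧ wH x = w)).card

/-- A(W, z) = ∑_{w=1}^W A(w) z^w. -/
def AW {N : ℕ} (C : Submodule (ZMod 2) (Pattern N)) (W : ℕ) (z : ℝ) : ℝ :=
  ∑ w ∈ Finset.Icc 1 W, (Aw C w : ℝ) * z ^ w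

/-- Standard normal CDF. -/
def Phi (x : ℝ) : ℝ := ∫ u in Set.Iic x, Real.exp (-u ^ 2 / 2) / Real.sqrt (2 * Real.pi)

/-!
Identify an erasure pattern with its set of erased coordinates, so that the error event becomes an
increasing family of sets, and call a coordinate of an undecodable pattern pivotal if un-erasing it
makes the pattern decodable. Every covered nonzero codeword is nonzero at every pivotal coordinate;
by linearity, if there are pivotal coordinates at all, then they form the support of a single
codeword. A union bound thus gives between `1` and `W` pivotal coordinates with probability at most
`A(W, p)`.

Let `I` be the Gaussian isoperimetric profile `φ ∘ Φ⁻¹`. A one-sided two-point inequality for `I`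
tensorizes to `I(P(p)) ≤ √(2 log(1/p)) 𝔼√k`, where `P(p)` is the error probability and `k` the
number of pivotal coordinates. Since `√W √k ≤ k` unless `1 ≤ k ≤ W`, and `p P'(p) = 𝔼 k` by
Russo's formula, `P` grows at least as fast as the claimed bound wherever it exceeds that bound.
At `ε*` it does not, hence it does not for any smaller `ε` either.
-/

open Filter Topology MeasureTheory ProbabilityTheory

section Calculus

lemma le_of_hasDerivAt_nonneg {f f' : ℝ → ℝ} {a b : ℝ} (hab : a ≤ b)
    (hf : ∀ x ∈ Set.Icc a b, HasDerivAt f (f' x) x) (hf' : ∀ x ∈ Set.Ioo a b, 0 ≤ f' x) :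
    f a ≤ f b := by
  have hmono : MonotoneOn f (Set.Icc a b) :=
    monotoneOn_of_hasDerivWithinAt_nonneg (convex_Icc a b)
      (fun x hx ↦ (hf x hx).continuousAt.continuousWithinAt)
      (fun x hx ↦ (hf x (interior_subset hx)).hasDerivWithinAt)
      (fun x hx ↦ hf' x (interior_Icc.subset hx))
  exact hmono (Set.left_mem_Icc.2 hab) (Set.right_mem_Icc.2 hab) hab

lemma nonpos_of_hasDerivAt_nonneg_of_pos {f f' : ℝ → ℝ} {a b : ℝ} (hab : a ≤ b)
    (hf : ∀ x ∈ Set.Icc a b, HasDerivAt f (f' x) x)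
    (hf' : ∀ x ∈ Set.Ioo a b, 0 < f x → 0 ≤ f' x) (hb : f b ≤ 0) : f a ≤ 0 := by
  by_contra! ha
  have hcont : ContinuousOn f (Set.Icc a b) := fun x hx ↦
    (hf x hx).continuousAt.continuousWithinAt
  obtain ⟨c, ⟨hc, hfc⟩, hmin⟩ : ∃ c, IsLeast (Set.Icc a b ∩ f ⁻¹' Set.Iic 0) c :=
    (isCompact_Icc.of_isClosed_subset (hcont.preimage_isClosed_of_isClosed isClosed_Icc
      isClosed_Iic) Set.inter_subset_left).exists_isLeast ⟨b, Set.right_mem_Icc.2 hab, hb⟩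
  have hsub : Set.Icc a c ⊆ Set.Icc a b := Set.Icc_subset_Icc_right hc.2
  have hpos : ∀ x ∈ Set.Ioo a c, 0 < f x := fun x hx ↦ by
    by_contra! hfx
    exact (hmin ⟨hsub (Set.Ioo_subset_Icc_self hx), hfx⟩).not_gt hx.2
  exact ha.not_ge ((le_of_hasDerivAt_nonneg hc.1 (fun x hx ↦ hf x (hsub hx)) fun x hx ↦
    hf' x (Set.Ioo_subset_Ioo_right hc.2 hx) (hpos x hx)).trans hfc)

end Calculus

section Gaussian

/-- The standard normal density, the derivative of `Phi`. -/
def phi (x : ℝ) : ℝ := Real.exp (-x ^ 2 / 2) / √(2 * Real.pi)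

lemma phi_eq_gaussianPDFReal : phi = gaussianPDFReal 0 1 := by
  ext x
  simp only [phi, gaussianPDFReal, NNReal.coe_one, mul_one, sub_zero]
  exact div_eq_inv_mul _ _

lemma phi_pos (x : ℝ) : 0 < phi x := by
  unfold phi; positivity

lemma phi_neg (x : ℝ) : phi (-x) = phi x := by
  simp only [phi, neg_sq]

lemma hasDerivAt_phi (x : ℝ) : HasDerivAt phi (-x * phi x) x := by
  have h : HasDerivAt (fun x : ℝ ↦ -x ^ 2 / 2) (-x) x :=
    ((hasDerivAt_pow 2 x).neg.div_const 2).congr_deriv (by norm_num; ring)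
  exact (h.exp.div_const √(2 * Real.pi)).congr_deriv (by simp only [phi]; ring)

lemma continuous_phi : Continuous phi :=
  continuous_iff_continuousAt.2 fun x ↦ (hasDerivAt_phi x).continuousAt

lemma integrable_phi : Integrable phi :=
  phi_eq_gaussianPDFReal ▸ integrable_gaussianPDFReal 0 1

lemma tendsto_phi_atBot : Tendsto phi atBot (𝓝 0) := by
  have hsq : Tendsto (fun x : ℝ ↦ x ^ 2) atBot atTop := by
    simpa only [Function.comp_def, sq_abs] using
      (tendsto_pow_atTop two_ne_zero).comp (tendsto_abs_atBot_atTop (G := ℝ))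
  have hexp := Real.tendsto_exp_atBot.comp
    ((tendsto_neg_atTop_atBot.comp hsq).atBot_div_const two_pos)
  have h := hexp.div_const √(2 * Real.pi)
  rw [zero_div] at h
  exact h

lemma phi_le_phi {x y : ℝ} (hxy : x ≤ y) (hy : y ≤ 0) : phi x ≤ phi y := by
  unfold phi
  gcongr Real.exp (?_ / 2) / _
  nlinarith

lemma three_eighths_le_phi_zero : 3 / 8 ≤ phi 0 := by
  have hsqrt : √(2 * Real.pi) ≤ 8 / 3 :=
    Real.sqrt_le_iff.2 ⟨by norm_num, by linarith [Real.pi_lt_d2]⟩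
  rw [phi, le_div_iff₀ (by positivity)]
  rw [zero_pow two_ne_zero, neg_zero, zero_div, Real.exp_zero]
  linarith

lemma Phi_eq_cdf : Phi = cdf (gaussianReal 0 1) := by
  ext x
  rw [cdf_eq_real, measureReal_def, gaussianReal_apply_eq_integral 0 one_ne_zero,
    ENNReal.toReal_ofReal (integral_nonneg (gaussianPDFReal_nonneg 0 1)),
    ← phi_eq_gaussianPDFReal]
  rfl

lemma tendsto_Phi_atBot : Tendsto Phi atBot (𝓝 0) :=
  Phi_eq_cdf ▸ tendsto_cdf_atBot _

lemma tendsto_Phi_atTop : Tendsto Phi atTop (𝓝 1) :=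
  Phi_eq_cdf ▸ tendsto_cdf_atTop _

lemma hasDerivAt_Phi (x : ℝ) : HasDerivAt Phi (phi x) x := by
  have hPhi : Phi = fun y ↦ (∫ u in (0 : ℝ)..y, phi u) + Phi 0 := by
    ext y
    rw [← intervalIntegral.integral_Iic_sub_Iic integrable_phi.integrableOn
      integrable_phi.integrableOn]
    exact (sub_add_cancel _ _).symm
  rw [hPhi]
  exact (intervalIntegral.integral_hasDerivAt_right (continuous_phi.intervalIntegrable _ _)
    (continuous_phi.stronglyMeasurableAtFilter _ _) continuous_phi.continuousAt).add_const _

lemma continuous_Phi : Continuous Phi :=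
  continuous_iff_continuousAt.2 fun x ↦ (hasDerivAt_Phi x).continuousAt

lemma strictMono_Phi : StrictMono Phi :=
  strictMono_of_hasDerivAt_pos hasDerivAt_Phi phi_pos

lemma Phi_pos (x : ℝ) : 0 < Phi x :=
  (strictMono_Phi.monotone.le_of_tendsto tendsto_Phi_atBot (x - 1)).trans_lt
    (strictMono_Phi (sub_one_lt x))

lemma Phi_lt_one (x : ℝ) : Phi x < 1 :=
  (strictMono_Phi (lt_add_one x)).trans_le
    (strictMono_Phi.monotone.ge_of_tendsto tendsto_Phi_atTop (x + 1))

lemma range_Phi : Set.range Phi = Set.Ioo 0 1 := by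
  refine Set.Subset.antisymm (Set.range_subset_iff.2 fun x ↦ ⟨Phi_pos x, Phi_lt_one x⟩) ?_
  rintro r ⟨h0, h1⟩
  obtain ⟨x, hx⟩ := (tendsto_Phi_atBot.eventually (gt_mem_nhds h0)).exists
  obtain ⟨y, hy⟩ := (tendsto_Phi_atTop.eventually (lt_mem_nhds h1)).exists
  exact mem_range_of_exists_le_of_exists_ge continuous_Phi ⟨x, hx.le⟩ ⟨y, hy.le⟩

lemma exists_Phi_eq {r : ℝ} (h0 : 0 < r) (h1 : r < 1) : ∃ x, Phi x = r :=
  range_Phi.symm.subset ⟨h0, h1⟩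

lemma Phi_neg (x : ℝ) : Phi (-x) = 1 - Phi x := by
  have hIoi : ∫ u in Set.Ioi x, phi u = Phi (-x) := by
    have h := integral_comp_neg_Ioi x phi
    simp only [phi_neg] at h
    exact h
  have htotal := intervalIntegral.integral_Iic_add_Ioi (b := x)
    integrable_phi.integrableOn integrable_phi.integrableOn
  rw [hIoi, phi_eq_gaussianPDFReal, integral_gaussianPDFReal_eq_one 0 one_ne_zero,
    ← phi_eq_gaussianPDFReal] at htotal
  exact eq_sub_of_add_eq' htotal

lemma Phi_zero : Phi 0 = 1 / 2 := by
  have h := Phi_neg 0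
  rw [neg_zero] at h
  linarith

/-- The integral `∫ u in x..m, (Phi u - Phi x)` in closed form. -/
def PhiIntegral (x m : ℝ) : ℝ := phi m - phi x + m * (Phi m - Phi x)

lemma hasDerivAt_PhiIntegral (x m : ℝ) : HasDerivAt (PhiIntegral x) (Phi m - Phi x) m :=
  (((hasDerivAt_phi m).sub_const (phi x)).add
    ((hasDerivAt_id m).mul ((hasDerivAt_Phi m).sub_const (Phi x)))).congr_deriv
      (by simp only [id_eq]; ring)

lemma PhiIntegral_self (x : ℝ) : PhiIntegral x x = 0 := by
  simp only [PhiIntegral, sub_self, mul_zero, add_zero]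

lemma PhiIntegral_nonneg {x m : ℝ} (hxm : x ≤ m) : 0 ≤ PhiIntegral x m := by
  rw [← PhiIntegral_self x]
  exact le_of_hasDerivAt_nonneg hxm (fun n _ ↦ hasDerivAt_PhiIntegral x n)
    fun n hn ↦ sub_nonneg.2 (strictMono_Phi.monotone hn.1.le)

/-- `PhiIntegral x` is log-concave: this is `G'' * G ≤ G' ^ 2` for `G = PhiIntegral x`. -/
lemma phi_mul_PhiIntegral_le_sq {x m : ℝ} (hxm : x ≤ m) :
    phi m * PhiIntegral x m ≤ (Phi m - Phi x) ^ 2 := by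
  have hfactor : ∀ n, x ≤ n → 0 ≤ Phi n - Phi x + n * PhiIntegral x n := fun n hxn ↦ by
    have hderiv : ∀ k, HasDerivAt (fun k ↦ Phi k - Phi x + k * PhiIntegral x k)
        (phi x + 2 * PhiIntegral x k) k := fun k ↦
      (((hasDerivAt_Phi k).sub_const (Phi x)).add
        ((hasDerivAt_id k).mul (hasDerivAt_PhiIntegral x k))).congr_deriv
          (by simp only [id_eq, PhiIntegral]; ring)
    have h := le_of_hasDerivAt_nonneg hxn (fun k _ ↦ hderiv k) fun k hk ↦ by
      have := PhiIntegral_nonneg hk.1.le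
      have := phi_pos x
      positivity
    simpa only [PhiIntegral_self, sub_self, mul_zero, add_zero] using h
  have hderiv : ∀ n, HasDerivAt (fun n ↦ (Phi n - Phi x) ^ 2 - phi n * PhiIntegral x n)
      (phi n * (Phi n - Phi x + n * PhiIntegral x n)) n := fun n ↦
    ((((hasDerivAt_Phi n).sub_const (Phi x)).pow 2).sub
      ((hasDerivAt_phi n).mul (hasDerivAt_PhiIntegral x n))).congr_deriv
        (by simp only [Nat.cast_ofNat, Nat.add_one_sub_one, pow_one]; ring)
  have h := le_of_hasDerivAt_nonneg hxm (fun n _ ↦ hderiv n) fun n hn ↦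
    mul_nonneg (phi_pos n).le (hfactor n hn.1.le)
  simp only [PhiIntegral_self, sub_self, mul_zero, ne_eq, OfNat.ofNat_ne_zero, not_false_eq_true,
    zero_pow] at h
  exact sub_nonneg.1 h

lemma phi_add_mul_Phi_nonneg (m : ℝ) : 0 ≤ phi m + m * Phi m := by
  have hlim : Tendsto (PhiIntegral · m) atBot (𝓝 (phi m - 0 + m * (Phi m - 0))) :=
    (tendsto_phi_atBot.const_sub _).add ((tendsto_Phi_atBot.const_sub _).const_mul m)
  rw [sub_zero, sub_zero] at hlim
  exact ge_of_tendsto hlim ((eventually_le_atBot m).mono fun x hx ↦ PhiIntegral_nonneg hx)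

lemma antitone_phi_div_Phi : Antitone fun m ↦ phi m / Phi m :=
  antitone_of_hasDerivAt_nonpos
    (fun m ↦ (hasDerivAt_phi m).div (hasDerivAt_Phi m) (Phi_pos m).ne') fun m ↦ by
      have hnum : -m * phi m * Phi m - phi m * phi m = -(phi m * (phi m + m * Phi m)) := by ring
      rw [hnum]
      exact div_nonpos_of_nonpos_of_nonneg
        (neg_nonpos.2 (mul_nonneg (phi_pos m).le (phi_add_mul_Phi_nonneg m))) (sq_nonneg _)

lemma three_quarters_mul_Phi_le_phi {m : ℝ} (hm : m ≤ 0) : 3 / 4 * Phi m ≤ phi m := by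
  have h : phi 0 / Phi 0 ≤ phi m / Phi m := antitone_phi_div_Phi hm
  rw [Phi_zero, le_div_iff₀ (Phi_pos m)] at h
  nlinarith [Phi_pos m, three_eighths_le_phi_zero]

end Gaussian

section IsoperimetricProfile

/-- The Gaussian isoperimetric profile `phi ∘ Phi⁻¹` on `(0, 1)`, extended by `0`. -/
def gaussianProfile : ℝ → ℝ := Function.extend Phi phi 0

lemma gaussianProfile_Phi (x : ℝ) : gaussianProfile (Phi x) = phi x :=
  strictMono_Phi.injective.extend_apply phi 0 x

lemma gaussianProfile_zero : gaussianProfile 0 = 0 :=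
  Function.extend_apply' _ _ _ fun ⟨x, hx⟩ ↦ (Phi_pos x).ne' hx

lemma gaussianProfile_one_sub (r : ℝ) : gaussianProfile (1 - r) = gaussianProfile r := by
  by_cases hr : ∃ x, Phi x = r
  · obtain ⟨x, rfl⟩ := hr
    rw [← Phi_neg, gaussianProfile_Phi, gaussianProfile_Phi, phi_neg]
  · have hr' : ¬∃ x, Phi x = 1 - r := fun ⟨x, hx⟩ ↦
      hr ⟨-x, by rw [Phi_neg, hx, sub_sub_cancel]⟩
    rw [gaussianProfile, Function.extend_apply' _ _ _ hr, Function.extend_apply' _ _ _ hr']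
    rfl

lemma gaussianProfile_one : gaussianProfile 1 = 0 := by
  rw [← gaussianProfile_one_sub, sub_self, gaussianProfile_zero]

lemma gaussianProfile_nonneg (r : ℝ) : 0 ≤ gaussianProfile r := by
  by_cases hr : ∃ x, Phi x = r
  · obtain ⟨x, rfl⟩ := hr
    rw [gaussianProfile_Phi]
    exact (phi_pos x).le
  · have hzero : gaussianProfile r = 0 := Function.extend_apply' _ _ _ hr
    exact hzero.ge

lemma continuousWithinAt_gaussianProfile_zero :
    ContinuousWithinAt gaussianProfile (Set.Icc 0 1) 0 := by
  rw [ContinuousWithinAt, gaussianProfile_zero]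
  refine tendsto_order.2 ⟨fun δ hδ ↦ .of_forall fun r ↦ hδ.trans_le (gaussianProfile_nonneg r),
    fun δ hδ ↦ ?_⟩
  obtain ⟨M, hM⟩ : ∃ M, ∀ x ≤ M, phi x < δ :=
    eventually_atBot.1 (tendsto_phi_atBot.eventually (gt_mem_nhds hδ))
  filter_upwards [self_mem_nhdsWithin, mem_nhdsWithin_of_mem_nhds (gt_mem_nhds (Phi_pos M))]
    with r ⟨hr0, _⟩ hrM
  rcases hr0.eq_or_lt with rfl | hr0
  · rwa [gaussianProfile_zero]
  · obtain ⟨x, rfl⟩ := exists_Phi_eq hr0 (hrM.trans (Phi_lt_one M))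
    rw [gaussianProfile_Phi]
    have hxM : x < M := strictMono_Phi.lt_iff_lt.1 hrM
    exact hM x hxM.le

lemma continuousOn_gaussianProfile : ContinuousOn gaussianProfile (Set.Icc 0 1) := by
  have hopen : IsOpenEmbedding Phi :=
    ⟨strictMono_Phi.isEmbedding_of_ordConnected (range_Phi ▸ Set.ordConnected_Ioo),
      range_Phi ▸ isOpen_Ioo⟩
  rintro r ⟨hr0, hr1⟩
  rcases hr0.eq_or_lt with rfl | hr0
  · exact continuousWithinAt_gaussianProfile_zero
  rcases hr1.eq_or_lt with rfl | hr1
  · have hreflect : ContinuousWithinAt (fun r : ℝ ↦ 1 - r) (Set.Icc 0 1) 1 :=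
      (continuous_const.sub continuous_id).continuousWithinAt
    have hmaps : Set.MapsTo (fun r : ℝ ↦ 1 - r) (Set.Icc 0 1) (Set.Icc 0 1) := fun r hr ↦
      ⟨sub_nonneg.2 hr.2, sub_le_self 1 hr.1⟩
    simpa only [Function.comp_def, gaussianProfile_one_sub] using
      continuousWithinAt_gaussianProfile_zero.comp_of_eq hreflect hmaps (sub_self 1)
  · obtain ⟨x, rfl⟩ := exists_Phi_eq hr0 hr1
    refine (hopen.continuousAt_iff.1 ?_).continuousWithinAt
    rw [show gaussianProfile ∘ Phi = phi from funext gaussianProfile_Phi]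
    exact continuous_phi.continuousAt

end IsoperimetricProfile

section TwoPoint

/-- For `κ * (Phi y - Phi x) = phi x`, the two-point inequality at `m ∈ (x, y)` says exactly that
this function is no larger at `m` than at `y`. -/
def twoPointPotential (κ x n : ℝ) : ℝ :=
  (κ + (phi n - phi x) / (Phi n - Phi x)) ^ 2 + 2 * Real.log (Phi n - Phi x)

lemma hasDerivAt_twoPointPotential (κ : ℝ) {x n : ℝ} (hxn : x < n) :
    HasDerivAt (twoPointPotential κ x)
      (2 * phi n / (Phi n - Phi x) ^ 2 *
        (Phi n - Phi x - (κ + (phi n - phi x) / (Phi n - Phi x)) * PhiIntegral x n)) n := by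
  have hR : Phi n - Phi x ≠ 0 := (sub_pos.2 (strictMono_Phi hxn)).ne'
  have hdR : HasDerivAt (fun k ↦ Phi k - Phi x) (phi n) n := (hasDerivAt_Phi n).sub_const _
  have hdslope : HasDerivAt (fun k ↦ κ + (phi k - phi x) / (Phi k - Phi x))
      (-(phi n * PhiIntegral x n) / (Phi n - Phi x) ^ 2) n :=
    ((((hasDerivAt_phi n).sub_const (phi x)).div hdR hR).const_add κ).congr_deriv
      (by simp only [PhiIntegral]; ring)
  refine ((hdslope.pow 2).add ((hdR.log hR).const_mul 2)).congr_deriv ?_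
  simp only [Nat.cast_ofNat, Nat.add_one_sub_one, pow_one]
  generalize Phi n - Phi x = R at hR ⊢
  field_simp
  ring

lemma twoPointPotential_deriv_nonneg {κ x n : ℝ} (hxn : x < n)
    (hκ : κ * (Phi n - Phi x) ≤ phi x) :
    0 ≤ 2 * phi n / (Phi n - Phi x) ^ 2 *
      (Phi n - Phi x - (κ + (phi n - phi x) / (Phi n - Phi x)) * PhiIntegral x n) := by
  have hR : 0 < Phi n - Phi x := sub_pos.2 (strictMono_Phi hxn)
  have hφ := phi_pos n
  refine mul_nonneg (by positivity) (sub_nonneg.2 ?_)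
  calc (κ + (phi n - phi x) / (Phi n - Phi x)) * PhiIntegral x n
      ≤ phi n / (Phi n - Phi x) * PhiIntegral x n := by
        refine mul_le_mul_of_nonneg_right ?_ (PhiIntegral_nonneg hxn.le)
        rw [← le_div_iff₀ hR] at hκ
        linarith [sub_div (phi n) (phi x) (Phi n - Phi x)]
    _ ≤ Phi n - Phi x := by
        rw [div_mul_eq_mul_div, div_le_iff₀ hR, ← sq]
        exact phi_mul_PhiIntegral_le_sq hxn.le

lemma phi_le_of_Phi_eq {x m y p : ℝ} (hxm : x < m) (hmy : m < y)
    (hp : Phi m = (1 - p) * Phi x + p * Phi y) :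
    phi m ≤ (1 - p) * phi x + p * √(phi y ^ 2 + 2 * -Real.log p * (Phi y - Phi x) ^ 2) := by
  set D := Phi y - Phi x with hD
  have hDpos : 0 < D := sub_pos.2 (strictMono_Phi (hxm.trans hmy))
  have hR : Phi m - Phi x = p * D := by rw [hp, hD]; ring
  have hp0 : 0 < p :=
    pos_of_mul_pos_left (hR ▸ sub_pos.2 (strictMono_Phi hxm)) hDpos.le
  set κ := phi x / D with hκ
  have hpot : twoPointPotential κ x m ≤ twoPointPotential κ x y :=
    le_of_hasDerivAt_nonneg hmy.le
      (fun n hn ↦ hasDerivAt_twoPointPotential κ (hxm.trans_le hn.1)) fun n hn ↦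
        twoPointPotential_deriv_nonneg (hxm.trans hn.1) <| by
          rw [hκ, div_mul_eq_mul_div, div_le_iff₀ hDpos]
          exact mul_le_mul_of_nonneg_left
            (sub_le_sub_right (strictMono_Phi hn.2).le _) (phi_pos x).le
  have hslope : κ + (phi y - phi x) / D = phi y / D := by rw [hκ]; ring
  simp only [twoPointPotential, hR, ← hD, hslope, Real.log_mul hp0.ne' hDpos.ne'] at hpot
  set z := κ + (phi m - phi x) / (p * D) with hz
  have hsq : (D * z) ^ 2 ≤ phi y ^ 2 + 2 * -Real.log p * D ^ 2 := by
    have hscale := mul_le_mul_of_nonneg_left hpot (sq_nonneg D)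
    have hDy : D ^ 2 * (phi y / D) ^ 2 = phi y ^ 2 := by field_simp
    linarith
  calc phi m = (1 - p) * phi x + p * (D * z) := by rw [hz, hκ]; field_simp; ring
    _ ≤ _ := by gcongr; exact Real.le_sqrt_of_sq_le hsq

lemma gaussianProfile_two_point_of_lt {a b p : ℝ} (ha : 0 < a) (hab : a < b) (hb : b < 1)
    (hp0 : 0 < p) (hp1 : p < 1) :
    gaussianProfile ((1 - p) * a + p * b) ≤ (1 - p) * gaussianProfile a +
      p * √(gaussianProfile b ^ 2 + 2 * -Real.log p * (b - a) ^ 2) := by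
  obtain ⟨x, rfl⟩ := exists_Phi_eq ha (hab.trans hb)
  obtain ⟨y, rfl⟩ := exists_Phi_eq (ha.trans hab) hb
  obtain ⟨m, hm⟩ := exists_Phi_eq (r := (1 - p) * Phi x + p * Phi y) (by nlinarith) (by nlinarith)
  rw [← hm, gaussianProfile_Phi, gaussianProfile_Phi, gaussianProfile_Phi]
  exact phi_le_of_Phi_eq (strictMono_Phi.lt_iff_lt.1 (by rw [hm]; nlinarith))
    (strictMono_Phi.lt_iff_lt.1 (by rw [hm]; nlinarith)) hm

lemma tendsto_gaussianProfile_lineMap {a c : ℝ} (ha : a ∈ Set.Icc (0 : ℝ) 1)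
    (hc : c ∈ Set.Icc (0 : ℝ) 1) :
    Tendsto (fun δ : ℝ ↦ gaussianProfile (AffineMap.lineMap a c δ)) (𝓝[Set.Ioo 0 1] 0)
      (𝓝 (gaussianProfile a)) := by
  have hline : ContinuousWithinAt (AffineMap.lineMap a c : ℝ → ℝ) (Set.Ioo 0 1) 0 :=
    AffineMap.lineMap_continuous.continuousWithinAt
  have h := (continuousOn_gaussianProfile a ha).comp_of_eq hline
    (fun δ hδ ↦ (convex_Icc 0 1).lineMap_mem ha hc (Set.Ioo_subset_Icc_self hδ))
    (AffineMap.lineMap_apply_zero a c)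
  rwa [ContinuousWithinAt, Function.comp_apply, AffineMap.lineMap_apply_zero] at h

/-- Bobkov-type two-point inequality; the asymmetry between `a` and `b` lets only the larger
endpoint pay for the increment `b - a`. -/
lemma gaussianProfile_two_point {a b p : ℝ} (ha : 0 ≤ a) (hab : a ≤ b) (hb : b ≤ 1)
    (hp0 : 0 < p) (hp1 : p < 1) :
    gaussianProfile ((1 - p) * a + p * b) ≤ (1 - p) * gaussianProfile a +
      p * √(gaussianProfile b ^ 2 + 2 * -Real.log p * (b - a) ^ 2) := by
  have hthird : (1 / 3 : ℝ) ∈ Set.Icc (0 : ℝ) 1 := ⟨by norm_num, by norm_num⟩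
  have htwoThirds : (2 / 3 : ℝ) ∈ Set.Icc (0 : ℝ) 1 := ⟨by norm_num, by norm_num⟩
  have hcomb : ∀ {x y : ℝ}, x ∈ Set.Icc (0 : ℝ) 1 → y ∈ Set.Icc (0 : ℝ) 1 →
      (1 - p) * x + p * y ∈ Set.Icc (0 : ℝ) 1 := fun hx hy ↦
    convex_Icc (0 : ℝ) 1 hx hy (sub_nonneg.2 hp1.le) hp0.le (sub_add_cancel 1 p)
  have ha' : a ∈ Set.Icc (0 : ℝ) 1 := ⟨ha, hab.trans hb⟩
  have hb' : b ∈ Set.Icc (0 : ℝ) 1 := ⟨ha.trans hab, hb⟩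
  have hdiff : Tendsto (fun δ : ℝ ↦ AffineMap.lineMap b (2 / 3) δ - AffineMap.lineMap a (1 / 3) δ)
      (𝓝[Set.Ioo 0 1] 0) (𝓝 (b - a)) := by
    have h : Continuous fun δ : ℝ ↦
        (AffineMap.lineMap b (2 / 3) δ - AffineMap.lineMap a (1 / 3) δ : ℝ) :=
      AffineMap.lineMap_continuous.sub AffineMap.lineMap_continuous
    simpa only [AffineMap.lineMap_apply_zero] using (h.tendsto 0).mono_left nhdsWithin_le_nhds
  -- Contract `(a, b)` slightly towards `(1 / 3, 2 / 3)` and let the contraction tend to `0`.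
  have : (𝓝[Set.Ioo (0 : ℝ) 1] 0).NeBot := left_nhdsWithin_Ioo_neBot one_pos
  refine le_of_tendsto_of_tendsto
    (tendsto_gaussianProfile_lineMap (hcomb ha' hb') (hcomb hthird htwoThirds))
    (((tendsto_gaussianProfile_lineMap ha' hthird).const_mul (1 - p)).add
      ((((tendsto_gaussianProfile_lineMap hb' htwoThirds).pow 2).add
        ((hdiff.pow 2).const_mul (2 * -Real.log p))).sqrt.const_mul p)) ?_
  filter_upwards [self_mem_nhdsWithin] with δ ⟨hδ0, hδ1⟩
  have hline : (AffineMap.lineMap ((1 - p) * a + p * b) ((1 - p) * (1 / 3) + p * (2 / 3)) δ : ℝ) =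
      (1 - p) * AffineMap.lineMap a (1 / 3) δ + p * AffineMap.lineMap b (2 / 3) δ := by
    simp only [AffineMap.lineMap_apply_ring]
    ring
  rw [hline]
  apply gaussianProfile_two_point_of_lt _ _ _ hp0 hp1 <;>
    simp only [AffineMap.lineMap_apply_ring] <;> nlinarith

end TwoPoint

section BernoulliSubset

variable {α : Type*} {s u : Finset α} {p : ℝ} {f g : Finset α → ℝ} {𝒜 ℬ : Set (Finset α)}

/-- The expectation of `f` at a random subset of `s` containing each element of `s` independently
with probability `p`. -/
def bernoulliExp (s : Finset α) (p : ℝ) (f : Finset α → ℝ) : ℝ :=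
  ∑ t ∈ s.powerset, p ^ #t * (1 - p) ^ (#s - #t) * f t

/-- The probability that a random subset of `s`, containing each element of `s` independently with
probability `p`, belongs to the family `𝒜`. -/
def bernoulliProb (s : Finset α) (p : ℝ) (𝒜 : Set (Finset α)) : ℝ :=
  bernoulliExp s p (𝒜.indicator 1)

lemma bernoulliExp_congr (h : ∀ t ⊆ s, f t = g t) : bernoulliExp s p f = bernoulliExp s p g :=
  sum_congr rfl fun t ht ↦ by rw [h t (mem_powerset.1 ht)]

lemma bernoulliExp_mono (hp : p ∈ Set.Icc (0 : ℝ) 1) (h : ∀ t ⊆ s, f t ≤ g t) :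
    bernoulliExp s p f ≤ bernoulliExp s p g :=
  sum_le_sum fun t ht ↦ mul_le_mul_of_nonneg_left (h t (mem_powerset.1 ht))
    (mul_nonneg (pow_nonneg hp.1 _) (pow_nonneg (sub_nonneg.2 hp.2) _))

lemma bernoulliExp_add : bernoulliExp s p (f + g) = bernoulliExp s p f + bernoulliExp s p g := by
  simp only [bernoulliExp, Pi.add_apply, mul_add, sum_add_distrib]

lemma bernoulliExp_smul (c : ℝ) : bernoulliExp s p (c • f) = c * bernoulliExp s p f := by
  simp only [bernoulliExp, Pi.smul_apply, smul_eq_mul, mul_sum, mul_left_comm]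

lemma bernoulliExp_zero : bernoulliExp s p 0 = 0 := by
  simp only [bernoulliExp, Pi.zero_apply, mul_zero, sum_const_zero]

lemma bernoulliExp_one : bernoulliExp s p 1 = 1 := by
  simp only [bernoulliExp, Pi.one_apply, mul_one, sum_pow_mul_eq_add_pow, add_sub_cancel, one_pow]

lemma bernoulliExp_nonneg (hp : p ∈ Set.Icc (0 : ℝ) 1) (h : ∀ t ⊆ s, 0 ≤ f t) :
    0 ≤ bernoulliExp s p f :=
  bernoulliExp_zero.ge.trans (bernoulliExp_mono hp h)

lemma bernoulliExp_empty : bernoulliExp ∅ p f = f ∅ := by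
  simp only [bernoulliExp, powerset_empty, sum_singleton, card_empty, pow_zero, one_mul,
    tsub_zero]

lemma bernoulliExp_insert [DecidableEq α] {a : α} (ha : a ∉ s) :
    bernoulliExp (insert a s) p f =
      (1 - p) * bernoulliExp s p f + p * bernoulliExp s p (fun t ↦ f (insert a t)) := by
  simp only [bernoulliExp, sum_powerset_insert ha, mul_sum]
  refine congrArg₂ _ (sum_congr rfl fun t ht ↦ ?_) (sum_congr rfl fun t ht ↦ ?_)
  · rw [card_insert_of_notMem ha, Nat.sub_add_comm (card_le_card (mem_powerset.1 ht)), pow_succ]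
    ring
  · rw [card_insert_of_notMem ha, card_insert_of_notMem fun h ↦ ha (mem_powerset.1 ht h),
      Nat.add_sub_add_right, pow_succ]
    ring

/-- Minkowski's integral inequality in the Euclidean plane. -/
lemma sqrt_sq_bernoulliExp_add_le (hp : p ∈ Set.Icc (0 : ℝ) 1) :
    √(bernoulliExp s p f ^ 2 + bernoulliExp s p g ^ 2) ≤
      bernoulliExp s p fun t ↦ √(f t ^ 2 + g t ^ 2) := by
  simp only [← Complex.norm_add_mul_I, bernoulliExp, Complex.ofReal_sum, sum_mul,
    ← sum_add_distrib]
  refine (norm_sum_le _ _).trans_eq (sum_congr rfl fun t _ ↦ ?_)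
  have hweight : 0 ≤ p ^ #t * (1 - p) ^ (#s - #t) :=
    mul_nonneg (pow_nonneg hp.1 _) (pow_nonneg (sub_nonneg.2 hp.2) _)
  rw [Complex.ofReal_mul _ (f t), Complex.ofReal_mul _ (g t), mul_assoc _ _ Complex.I, ← mul_add,
    norm_mul, Complex.norm_of_nonneg hweight]

lemma bernoulliProb_insert [DecidableEq α] {a : α} (ha : a ∉ s) :
    bernoulliProb (insert a s) p 𝒜 =
      (1 - p) * bernoulliProb s p 𝒜 + p * bernoulliProb s p (insert a ⁻¹' 𝒜) :=
  bernoulliExp_insert ha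

lemma bernoulliProb_nonneg (hp : p ∈ Set.Icc (0 : ℝ) 1) : 0 ≤ bernoulliProb s p 𝒜 :=
  bernoulliExp_nonneg hp fun _ _ ↦ Set.indicator_nonneg (fun _ _ ↦ zero_le_one) _

lemma bernoulliProb_mono (hp : p ∈ Set.Icc (0 : ℝ) 1) (h : 𝒜 ⊆ ℬ) :
    bernoulliProb s p 𝒜 ≤ bernoulliProb s p ℬ :=
  bernoulliExp_mono hp fun _ _ ↦ Set.indicator_le_indicator_of_subset h (fun _ ↦ zero_le_one) _

lemma bernoulliProb_le_one (hp : p ∈ Set.Icc (0 : ℝ) 1) : bernoulliProb s p 𝒜 ≤ 1 :=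
  (bernoulliExp_mono hp fun _ _ ↦ Set.indicator_le_self' (fun _ _ ↦ zero_le_one) _).trans_eq
    bernoulliExp_one

lemma bernoulliProb_sdiff (h : 𝒜 ⊆ ℬ) :
    bernoulliProb s p (ℬ \ 𝒜) = bernoulliProb s p ℬ - bernoulliProb s p 𝒜 := by
  rw [eq_sub_iff_add_eq, bernoulliProb, bernoulliProb, ← bernoulliExp_add,
    Set.indicator_sdiff h, sub_add_cancel, bernoulliProb]

lemma bernoulliProb_superset (hu : u ⊆ s) : bernoulliProb s p {t | u ⊆ t} = p ^ #u := by
  classical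
  induction s using Finset.induction_on generalizing u with
  | empty =>
    obtain rfl := subset_empty.1 hu
    simp [bernoulliProb, bernoulliExp_empty]
  | insert a s ha ih =>
    rw [bernoulliProb_insert ha]
    by_cases hau : a ∈ u
    · have hzero : bernoulliProb s p {t | u ⊆ t} = 0 :=
        (bernoulliExp_congr fun t ht ↦ Set.indicator_of_notMem
          (fun h : u ⊆ t ↦ ha (ht (h hau))) _).trans bernoulliExp_zero
      have herase : insert a ⁻¹' {t | u ⊆ t} = {t | u.erase a ⊆ t} :=
        Set.ext fun t ↦ subset_insert_iff
      rw [hzero, herase, ih (subset_insert_iff.1 hu), mul_zero, zero_add, ← pow_succ',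
        card_erase_add_one hau]
    · have hinsert : insert a ⁻¹' {t | u ⊆ t} = {t | u ⊆ t} :=
        Set.ext fun t ↦ subset_insert_iff_of_notMem hau
      rw [hinsert, ih ((subset_insert_iff_of_notMem hau).1 hu)]
      ring

lemma bernoulliProb_le_sum_pow {β : Type*} (hp : p ∈ Set.Icc (0 : ℝ) 1) (I : Finset β)
    {v : β → Finset α} (hv : ∀ i ∈ I, v i ⊆ s) (h : ∀ t ∈ 𝒜, ∃ i ∈ I, v i ⊆ t) :
    bernoulliProb s p 𝒜 ≤ ∑ i ∈ I, p ^ #(v i) := by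
  calc bernoulliProb s p 𝒜
      ≤ bernoulliExp s p (fun t ↦ ∑ i ∈ I, {t | v i ⊆ t}.indicator 1 t) := by
        refine bernoulliExp_mono hp fun t _ ↦ ?_
        have hterm : ∀ i ∈ I, (0 : ℝ) ≤ {t | v i ⊆ t}.indicator 1 t := fun i _ ↦
          Set.indicator_nonneg (fun _ _ ↦ zero_le_one) t
        refine Set.indicator_apply_le' (fun ht ↦ ?_) fun _ ↦ sum_nonneg hterm
        obtain ⟨i, hi, hit⟩ := h t ht
        have hmem : t ∈ {t | v i ⊆ t} := hit
        exact (Set.indicator_of_mem hmem 1).ge.trans (single_le_sum hterm hi)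
    _ = ∑ i ∈ I, bernoulliProb s p {t | v i ⊆ t} := by
        simp only [bernoulliProb, bernoulliExp, mul_sum]
        exact sum_comm
    _ = ∑ i ∈ I, p ^ #(v i) := sum_congr rfl fun i hi ↦ bernoulliProb_superset (hv i hi)

lemma sqrt_sq_add_mul_bernoulliProb_sq_le {k x : ℝ} (hp : p ∈ Set.Icc (0 : ℝ) 1) (hk : 0 ≤ k)
    (hx0 : 0 ≤ x) (hf : ∀ t ⊆ s, 0 ≤ f t) (hx : x ≤ √k * bernoulliExp s p (fun t ↦ √(f t))) :
    √(x ^ 2 + k * bernoulliProb s p 𝒜 ^ 2) ≤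
      √k * bernoulliExp s p (fun t ↦ √(f t + 𝒜.indicator 1 t)) := by
  calc √(x ^ 2 + k * bernoulliProb s p 𝒜 ^ 2)
      ≤ √((√k * bernoulliExp s p (fun t ↦ √(f t))) ^ 2 + k * bernoulliProb s p 𝒜 ^ 2) := by
        gcongr
    _ = √k * √(bernoulliExp s p (fun t ↦ √(f t)) ^ 2 + bernoulliProb s p 𝒜 ^ 2) := by
        rw [mul_pow, Real.sq_sqrt hk, ← mul_add, Real.sqrt_mul hk]
    _ ≤ √k * bernoulliExp s p (fun t ↦ √(√(f t) ^ 2 + 𝒜.indicator 1 t ^ 2)) := by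
        gcongr
        exact sqrt_sq_bernoulliExp_add_le hp
    _ = √k * bernoulliExp s p (fun t ↦ √(f t + 𝒜.indicator 1 t)) := by
        refine congrArg _ (bernoulliExp_congr fun t ht ↦ ?_)
        rw [Real.sq_sqrt (hf t ht)]
        by_cases h : t ∈ 𝒜 <;> simp [h]

end BernoulliSubset

section Pivotal

variable {α : Type*} [DecidableEq α] {s t : Finset α} {p : ℝ} {𝒜 : Set (Finset α)} {a : α}

/-- The elements of `t` whose removal takes `t` out of the family `𝒜`; empty if `t ∉ 𝒜`. -/
def pivotal (𝒜 : Set (Finset α)) (t : Finset α) : Finset α :=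
  {i ∈ t | t ∈ 𝒜 ∧ t.erase i ∉ 𝒜}

lemma mem_pivotal {i : α} : i ∈ pivotal 𝒜 t ↔ i ∈ t ∧ t ∈ 𝒜 ∧ t.erase i ∉ 𝒜 :=
  mem_filter

lemma isUpperSet_preimage_insert (h𝒜 : IsUpperSet 𝒜) (a : α) : IsUpperSet (insert a ⁻¹' 𝒜) :=
  fun _ _ htu ht ↦ h𝒜 (insert_subset_insert a htu) ht

lemma subset_preimage_insert (h𝒜 : IsUpperSet 𝒜) (a : α) : 𝒜 ⊆ insert a ⁻¹' 𝒜 :=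
  fun t ht ↦ h𝒜 (subset_insert a t) ht

lemma card_pivotal_insert (ha : a ∉ t) :
    (#(pivotal 𝒜 (insert a t)) : ℝ) =
      #(pivotal (insert a ⁻¹' 𝒜) t) + (insert a ⁻¹' 𝒜 \ 𝒜).indicator 1 t := by
  have hold : {i ∈ t | insert a t ∈ 𝒜 ∧ (insert a t).erase i ∉ 𝒜} =
      pivotal (insert a ⁻¹' 𝒜) t := filter_congr fun i hi ↦ by
    rw [erase_insert_of_ne (ne_of_mem_of_not_mem hi ha).symm]
    rfl
  have hnew : a ∉ pivotal (insert a ⁻¹' 𝒜) t := fun h ↦ ha (mem_pivotal.1 h).1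
  rw [pivotal, filter_insert, hold, erase_insert ha]
  split_ifs with h
  · have hmem : t ∈ insert a ⁻¹' 𝒜 \ 𝒜 := h
    rw [card_insert_of_notMem hnew, Nat.cast_succ, Set.indicator_of_mem hmem, Pi.one_apply]
  · have hmem : t ∉ insert a ⁻¹' 𝒜 \ 𝒜 := h
    rw [Set.indicator_of_notMem hmem, add_zero]

/-- The Margulis–Russo formula. -/
lemma hasDerivAt_bernoulliProb (h𝒜 : IsUpperSet 𝒜) (hp : p ≠ 0) :
    HasDerivAt (fun q ↦ bernoulliProb s q 𝒜) (bernoulliExp s p (fun t ↦ #(pivotal 𝒜 t)) / p)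
      p := by
  induction s using Finset.induction_on generalizing 𝒜 with
  | empty =>
    simp only [bernoulliProb, bernoulliExp_empty]
    exact (hasDerivAt_const p _).congr_deriv (by simp [pivotal])
  | insert a s ha ih =>
    simp only [bernoulliProb_insert ha]
    refine ((((hasDerivAt_id p).const_sub 1).mul (ih h𝒜)).add
      ((hasDerivAt_id p).mul (ih (isUpperSet_preimage_insert h𝒜 a)))).congr_deriv ?_
    have hpivotal : bernoulliExp s p (fun t ↦ #(pivotal 𝒜 (insert a t))) =
        bernoulliExp s p (fun t ↦ #(pivotal (insert a ⁻¹' 𝒜) t)) +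
          (bernoulliProb s p (insert a ⁻¹' 𝒜) - bernoulliProb s p 𝒜) := by
      rw [← bernoulliProb_sdiff (subset_preimage_insert h𝒜 a), bernoulliProb, ← bernoulliExp_add]
      exact bernoulliExp_congr fun t ht ↦ card_pivotal_insert fun h ↦ ha (ht h)
    rw [bernoulliExp_insert ha, hpivotal]
    simp only [id_eq]
    field_simp
    ring

/-- Bobkov's argument: the two-point inequality tensorizes by induction on the ground set. -/
lemma gaussianProfile_bernoulliProb_le (h𝒜 : IsUpperSet 𝒜) (hp0 : 0 < p) (hp1 : p < 1) :
    gaussianProfile (bernoulliProb s p 𝒜) ≤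
      √(2 * -Real.log p) * bernoulliExp s p (fun t ↦ √(#(pivotal 𝒜 t))) := by
  have hp : p ∈ Set.Icc (0 : ℝ) 1 := ⟨hp0.le, hp1.le⟩
  have hlog : 0 ≤ 2 * -Real.log p := by linarith [Real.log_neg hp0 hp1]
  induction s using Finset.induction_on generalizing 𝒜 with
  | empty =>
    have hzero : gaussianProfile (𝒜.indicator 1 ∅) = 0 := by
      by_cases h : ∅ ∈ 𝒜 <;> simp [h, gaussianProfile_zero, gaussianProfile_one]
    rw [bernoulliProb, bernoulliExp_empty, hzero, bernoulliExp_empty]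
    positivity
  | insert a s ha ih =>
    have hsub := subset_preimage_insert h𝒜 a
    have hinsert : √(gaussianProfile (bernoulliProb s p (insert a ⁻¹' 𝒜)) ^ 2 +
        2 * -Real.log p * (bernoulliProb s p (insert a ⁻¹' 𝒜) - bernoulliProb s p 𝒜) ^ 2) ≤
          √(2 * -Real.log p) * bernoulliExp s p (fun t ↦ √(#(pivotal 𝒜 (insert a t)))) := by
      rw [← bernoulliProb_sdiff hsub]
      refine (sqrt_sq_add_mul_bernoulliProb_sq_le hp hlog (gaussianProfile_nonneg _)
        (fun _ _ ↦ Nat.cast_nonneg _) (ih (isUpperSet_preimage_insert h𝒜 a))).trans_eq ?_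
      exact congrArg _ (bernoulliExp_congr fun t ht ↦ by
        rw [card_pivotal_insert fun h ↦ ha (ht h)])
    rw [bernoulliProb_insert ha, bernoulliExp_insert ha]
    calc _ ≤ _ := gaussianProfile_two_point (bernoulliProb_nonneg hp)
            (bernoulliProb_mono hp hsub) (bernoulliProb_le_one hp) hp0 hp1
      _ ≤ (1 - p) * (√(2 * -Real.log p) * bernoulliExp s p (fun t ↦ √(#(pivotal 𝒜 t)))) +
          p * (√(2 * -Real.log p) *
            bernoulliExp s p (fun t ↦ √(#(pivotal 𝒜 (insert a t))))) := by
          gcongr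
          exact ih h𝒜
      _ = _ := by ring

end Pivotal

section Threshold

variable {α : Type*} {s : Finset α} {p : ℝ} {𝒜 : Set (Finset α)}

lemma monotoneOn_bernoulliProb (h𝒜 : IsUpperSet 𝒜) :
    MonotoneOn (bernoulliProb s · 𝒜) (Set.Ioc 0 1) := by
  classical
  refine fun p hp q hq hpq ↦ le_of_hasDerivAt_nonneg hpq
    (fun r hr ↦ hasDerivAt_bernoulliProb h𝒜 (hp.1.trans_le hr.1).ne') fun r hr ↦ ?_
  have hr0 : 0 < r := hp.1.trans hr.1
  exact div_nonneg (bernoulliExp_nonneg ⟨hr0.le, hr.2.le.trans hq.2⟩ fun _ _ ↦ Nat.cast_nonneg _)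
    hr0.le

lemma sqrt_mul_sqrt_le_add_indicator (W k : ℕ) :
    √W * √k ≤ k + W / 4 * (Set.Icc 1 W).indicator 1 k := by
  have hW := Real.sq_sqrt W.cast_nonneg
  have hk := Real.sq_sqrt k.cast_nonneg
  by_cases hmem : k ∈ Set.Icc 1 W
  · rw [Set.indicator_of_mem hmem, Pi.one_apply]
    linarith [sq_nonneg (√k - √W / 2)]
  · rw [Set.indicator_of_notMem hmem, mul_zero, add_zero]
    rcases k.eq_zero_or_pos with rfl | hk0
    · simp
    · have hWk : √W ≤ √k := by
        gcongr
        exact (not_le.1 fun hkW ↦ hmem ⟨hk0, hkW⟩).le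
      linarith [mul_le_mul_of_nonneg_right hWk (Real.sqrt_nonneg k)]

lemma sqrt_mul_bernoulliExp_sqrt_le (hp : p ∈ Set.Icc (0 : ℝ) 1) (W : ℕ) (k : Finset α → ℕ) :
    √W * bernoulliExp s p (fun t ↦ √(k t)) ≤
      bernoulliExp s p (fun t ↦ k t) + W / 4 * bernoulliProb s p {t | k t ∈ Set.Icc 1 W} := by
  rw [bernoulliProb, ← bernoulliExp_smul, ← bernoulliExp_smul, ← bernoulliExp_add]
  exact bernoulliExp_mono hp fun t _ ↦ sqrt_mul_sqrt_le_add_indicator W (k t)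

lemma phi_add_le_sqrt_two_mul_gaussianProfile {x c r : ℝ} (hc : 0 ≤ c) (hr : Phi x + c ≤ r)
    (hr2 : r ≤ 1 / 2) : phi x + c / 4 ≤ √2 * gaussianProfile r := by
  obtain ⟨m, rfl⟩ := exists_Phi_eq (by linarith [Phi_pos x]) (by linarith)
  have hm : m ≤ 0 := strictMono_Phi.le_iff_le.1 (hr2.trans_eq Phi_zero.symm)
  have hxm : x ≤ m := strictMono_Phi.le_iff_le.1 (by linarith)
  have hsqrt : 4 / 3 ≤ √2 := Real.le_sqrt_of_sq_le (by norm_num)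
  rw [gaussianProfile_Phi]
  calc phi x + c / 4 ≤ phi m + Phi m / 4 := by linarith [phi_le_phi hxm hm, Phi_pos x]
    _ ≤ 4 / 3 * phi m := by linarith [three_quarters_mul_Phi_le_phi hm]
    _ ≤ √2 * phi m := mul_le_mul_of_nonneg_right hsqrt (phi_pos m).le

lemma hasDerivAt_sqrt_neg_log (hp0 : 0 < p) (hp1 : p < 1) :
    HasDerivAt (fun p ↦ √(-Real.log p)) (-(1 / (2 * p * √(-Real.log p)))) p :=
  ((Real.hasDerivAt_log hp0.ne').neg.sqrt (neg_pos.2 (Real.log_neg hp0 hp1)).ne').congr_deriv (by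
    simp only [Pi.neg_apply]; field_simp)

/-- The bound at `p` for the probability of a family that has probability at most `1 / 2` at `q`
and boundaries of size between `1` and `W` with probability at most `B`. -/
def thresholdBound (W : ℕ) (B q p : ℝ) : ℝ :=
  Phi (√W * (√(-Real.log q) - √(-Real.log p))) + 2 * √(-Real.log p) * √W * B

lemma half_le_thresholdBound_self {W : ℕ} {B q : ℝ} (hB : 0 ≤ B) :
    1 / 2 ≤ thresholdBound W B q q := by
  rw [thresholdBound, sub_self, mul_zero, Phi_zero]
  have : 0 ≤ 2 * √(-Real.log q) * √W * B := by positivity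
  linarith

lemma hasDerivAt_thresholdBound (W : ℕ) (B q : ℝ) (hp0 : 0 < p) (hp1 : p < 1) :
    HasDerivAt (thresholdBound W B q)
      (√W / (2 * √(-Real.log p)) *
        (phi (√W * (√(-Real.log q) - √(-Real.log p))) - 2 * B) / p) p := by
  have hs := hasDerivAt_sqrt_neg_log hp0 hp1
  refine (((hasDerivAt_Phi _).comp p ((hs.const_sub √(-Real.log q)).const_mul √W)).add
    (((hs.const_mul 2).mul_const √W).mul_const B)).congr_deriv ?_
  have : √(-Real.log p) ≠ 0 := (Real.sqrt_pos.2 (neg_pos.2 (Real.log_neg hp0 hp1))).ne'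
  field_simp
  ring

variable [DecidableEq α]

/-- Above the barrier `thresholdBound`, the isoperimetric inequality makes the total influence
outgrow the barrier. -/
lemma thresholdBound_deriv_le (h𝒜 : IsUpperSet 𝒜) (hp0 : 0 < p) (hp1 : p < 1) {W : ℕ} {B q : ℝ}
    (hB : bernoulliProb s p {t | #(pivotal 𝒜 t) ∈ Set.Icc 1 W} ≤ B)
    (hle : thresholdBound W B q p ≤ bernoulliProb s p 𝒜) (hhalf : bernoulliProb s p 𝒜 ≤ 1 / 2) :
    √W / (2 * √(-Real.log p)) * (phi (√W * (√(-Real.log q) - √(-Real.log p))) - 2 * B) ≤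
      bernoulliExp s p (fun t ↦ #(pivotal 𝒜 t)) := by
  have hp : p ∈ Set.Icc (0 : ℝ) 1 := ⟨hp0.le, hp1.le⟩
  have hB0 : 0 ≤ B := (bernoulliProb_nonneg hp).trans hB
  have hiso := gaussianProfile_bernoulliProb_le (s := s) h𝒜 hp0 hp1
  have hs : 0 < √(-Real.log p) := Real.sqrt_pos.2 (neg_pos.2 (Real.log_neg hp0 hp1))
  have hgauss := phi_add_le_sqrt_two_mul_gaussianProfile (by positivity) hle hhalf
  have hsplit := sqrt_mul_bernoulliExp_sqrt_le (s := s) hp W fun t ↦ #(pivotal 𝒜 t)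
  rw [Real.sqrt_mul zero_le_two] at hiso
  set σ := √(-Real.log p)
  set x := √W * (√(-Real.log q) - σ)
  set E := bernoulliExp s p fun t ↦ √(#(pivotal 𝒜 t))
  have hE : phi x + 2 * σ * √W * B / 4 ≤ 2 * σ * E := by
    calc _ ≤ √2 * gaussianProfile (bernoulliProb s p 𝒜) := hgauss
      _ ≤ √2 * (√2 * σ * E) := by gcongr
      _ = 2 * σ * E := by rw [← mul_assoc, ← mul_assoc, Real.mul_self_sqrt zero_le_two]
  calc √W / (2 * σ) * (phi x - 2 * B) ≤ √W / (2 * σ) * phi x := by gcongr; linarith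
    _ ≤ √W / (2 * σ) * (2 * σ * E - 2 * σ * √W * B / 4) := by gcongr; linarith
    _ = √W * E - W / 4 * B := by field_simp; linear_combination -B * Real.sq_sqrt W.cast_nonneg
    _ ≤ bernoulliExp s p (fun t ↦ #(pivotal 𝒜 t)) := by
      have := mul_le_mul_of_nonneg_left hB (show (0 : ℝ) ≤ W / 4 by positivity)
      linarith

theorem bernoulliProb_le_thresholdBound (h𝒜 : IsUpperSet 𝒜) {W : ℕ} {B q ε : ℝ} (hq : q < 1)
    (hhalf : bernoulliProb s q 𝒜 ≤ 1 / 2)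
    (hB : ∀ p ∈ Set.Ioc 0 q, bernoulliProb s p {t | #(pivotal 𝒜 t) ∈ Set.Icc 1 W} ≤ B)
    (hε : ε ∈ Set.Ioc 0 q) : bernoulliProb s ε 𝒜 ≤ thresholdBound W B q ε := by
  have hq0 : 0 < q := hε.1.trans_le hε.2
  have hB0 : 0 ≤ B := (bernoulliProb_nonneg ⟨hq0.le, hq.le⟩).trans (hB q ⟨hq0, le_rfl⟩)
  have hpos : ∀ {p}, p ∈ Set.Icc ε q → 0 < p := fun hp ↦ hε.1.trans_le hp.1
  have hlt : ∀ {p}, p ∈ Set.Icc ε q → p < 1 := fun hp ↦ hp.2.trans_lt hq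
  refine sub_nonpos.1 (nonpos_of_hasDerivAt_nonneg_of_pos
    (f := fun p ↦ bernoulliProb s p 𝒜 - thresholdBound W B q p) hε.2
    (fun p hp ↦ (hasDerivAt_bernoulliProb h𝒜 (hpos hp).ne').sub
      (hasDerivAt_thresholdBound W B q (hpos hp) (hlt hp))) (fun p hp hfp ↦ ?_)
    (sub_nonpos.2 (hhalf.trans (half_le_thresholdBound_self hB0))))
  have hpIcc := Set.Ioo_subset_Icc_self hp
  have hpq : bernoulliProb s p 𝒜 ≤ bernoulliProb s q 𝒜 :=
    monotoneOn_bernoulliProb h𝒜 ⟨hpos hpIcc, (hlt hpIcc).le⟩ ⟨hq0, hq.le⟩ hp.2.le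
  rw [← sub_div]
  exact div_nonneg (sub_nonneg.2 (thresholdBound_deriv_le h𝒜 (hpos hpIcc) (hlt hpIcc)
    (hB p ⟨hpos hpIcc, hp.2.le⟩) (sub_pos.1 hfp).le (hpq.trans hhalf))) (hpos hpIcc).le

end Threshold

section Code

variable {ι R : Type*} [Fintype ι] [CommRing R] {C : Submodule R (ι → R)} {t : Finset ι}

/-- The support of a codeword as a finset, so that erasure patterns become subsets of the
coordinates. -/
def codewordSupport (x : ι → R) : Finset ι := {i | x i ≠ 0}

lemma mem_codewordSupport {x : ι → R} {i : ι} : i ∈ codewordSupport x ↔ x i ≠ 0 :=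
  mem_filter_univ i

/-- The error event of maximum-likelihood decoding over an erasure channel: the sets of coordinates
containing the support of a nonzero codeword of `C`. -/
def coveringFamily (C : Submodule R (ι → R)) : Set (Finset ι) :=
  {t | ∃ x ∈ C, x ≠ 0 ∧ codewordSupport x ⊆ t}

lemma isUpperSet_coveringFamily : IsUpperSet (coveringFamily C) :=
  fun _ _ htu ⟨x, hxC, hx0, hxt⟩ ↦ ⟨x, hxC, hx0, hxt.trans htu⟩

lemma pivotal_coveringFamily_subset [DecidableEq ι] {x : ι → R} (hxC : x ∈ C) (hx0 : x ≠ 0)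
    (hxt : codewordSupport x ⊆ t) : pivotal (coveringFamily C) t ⊆ codewordSupport x := by
  intro i hi
  by_contra hix
  exact (mem_pivotal.1 hi).2.2 ⟨x, hxC, hx0, subset_erase.2 ⟨hxt, hix⟩⟩

/-- A covered codeword nonzero at a non-pivotal `j` could be combined with a covered codeword
vanishing at `j` so as to cancel a pivotal coordinate but not `j`. -/
lemma exists_codewordSupport_eq_pivotal [IsDomain R] [DecidableEq ι]
    (h : (pivotal (coveringFamily C) t).Nonempty) :
    ∃ x ∈ C, codewordSupport x = pivotal (coveringFamily C) t := by
  obtain ⟨i, hi⟩ := h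
  obtain ⟨x, hxC, hx0, hxt⟩ := (mem_pivotal.1 hi).2.1
  refine ⟨x, hxC, Subset.antisymm (fun j hj ↦ ?_) (pivotal_coveringFamily_subset hxC hx0 hxt)⟩
  by_contra hj_pivotal
  obtain ⟨y, hyC, hy0, hyt⟩ : t.erase j ∈ coveringFamily C := by
    by_contra htj
    exact hj_pivotal (mem_pivotal.2 ⟨hxt hj, (mem_pivotal.1 hi).2.1, htj⟩)
  obtain ⟨hyt, hyj⟩ := subset_erase.1 hyt
  have hyi : y i ≠ 0 := mem_codewordSupport.1 (pivotal_coveringFamily_subset hyC hy0 hyt hi)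
  set z := x i • y - y i • x with hz
  have hzC : z ∈ C := C.sub_mem (C.smul_mem _ hyC) (C.smul_mem _ hxC)
  have hzt : codewordSupport z ⊆ t := fun k hk ↦ by
    by_contra hkt
    have hxk : x k = 0 := not_not.1 fun h ↦ hkt (hxt (mem_codewordSupport.2 h))
    have hyk : y k = 0 := not_not.1 fun h ↦ hkt (hyt (mem_codewordSupport.2 h))
    exact mem_codewordSupport.1 hk (by simp [hz, hxk, hyk])
  have hz0 : z ≠ 0 := fun h ↦ by
    have hyj0 : y j = 0 := not_not.1 fun h ↦ hyj (mem_codewordSupport.2 h)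
    have hzj : z j = -(y i * x j) := by simp [hz, hyj0]
    rw [h, Pi.zero_apply, zero_eq_neg] at hzj
    exact mul_ne_zero hyi (mem_codewordSupport.1 hj) hzj
  have hzi : z i = 0 := by
    simp only [hz, Pi.sub_apply, Pi.smul_apply, smul_eq_mul, mul_comm (x i), sub_self]
  exact mem_codewordSupport.1 (pivotal_coveringFamily_subset hzC hz0 hzt hi) hzi

lemma bernoulliProb_card_pivotal_le [IsDomain R] [Fintype R] [DecidableEq ι] {p : ℝ}
    (hp : p ∈ Set.Icc (0 : ℝ) 1) (W : ℕ) :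
    bernoulliProb univ p {t | #(pivotal (coveringFamily C) t) ∈ Set.Icc 1 W} ≤
      ∑ x : ι → R with x ∈ C ∧ #(codewordSupport x) ∈ Icc 1 W, p ^ #(codewordSupport x) := by
  refine bernoulliProb_le_sum_pow hp _ (fun _ _ ↦ subset_univ _) fun t ht ↦ ?_
  obtain ⟨x, hxC, hx⟩ := exists_codewordSupport_eq_pivotal (card_pos.1 ht.1)
  exact ⟨x, (mem_filter_univ x).2 ⟨hxC, hx ▸ mem_Icc.2 ht⟩,
    hx.subset.trans (filter_subset _ _)⟩

end Code

section BinaryCode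

variable {N : ℕ} (C : Submodule (ZMod 2) (Pattern N))

lemma card_codewordSupport (x : Pattern N) : #(codewordSupport x) = wH x := by
  unfold codewordSupport wH hammingNorm
  congr

lemma covers_iff_codewordSupport_subset {ω x : Pattern N} :
    covers ω x ↔ codewordSupport x ⊆ codewordSupport ω :=
  forall_congr' fun i ↦ by rw [mem_codewordSupport, mem_codewordSupport]

lemma codewordSupport_bijective :
    Function.Bijective (codewordSupport : Pattern N → Finset (Fin N)) := by
  refine (Fintype.bijective_iff_injective_and_card _).2 ⟨fun x y hxy ↦ funext fun i ↦ ?_, ?_⟩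
  · have hbit : ∀ a b : ZMod 2, (a ≠ 0 ↔ b ≠ 0) → a = b := by decide
    exact hbit _ _ (by rw [← mem_codewordSupport, hxy, mem_codewordSupport])
  · rw [Fintype.card_fun, ZMod.card, Fintype.card_finset]

lemma Pmap_eq_bernoulliProb (p : ℝ) :
    Pmap C p = bernoulliProb univ p (coveringFamily C) := by
  rw [Pmap, muE, errBEC, sum_filter, bernoulliProb, bernoulliExp, powerset_univ, card_fin]
  refine Fintype.sum_bijective _ codewordSupport_bijective _ _ fun ω ↦ ?_
  simp only [Set.indicator_apply, coveringFamily, Set.mem_ofPred_eq, Pi.one_apply, mul_ite, mul_one,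
    mul_zero, card_codewordSupport, covers_iff_codewordSupport_subset]

lemma sum_pow_card_codewordSupport_eq_AW (W : ℕ) (p : ℝ) :
    ∑ x : Pattern N with x ∈ C ∧ #(codewordSupport x) ∈ Icc 1 W, p ^ #(codewordSupport x) =
      AW C W p := by
  simp only [AW, ← filter_filter, ← sum_fiberwise_eq_sum_filter]
  refine sum_congr rfl fun w _ ↦ ?_
  simp only [filter_filter, card_codewordSupport]
  rw [Aw, ← nsmul_eq_mul]
  exact sum_eq_card_nsmul fun x hx ↦ by rw [((mem_filter_univ x).1 hx).2]

lemma AW_le_AW (W : ℕ) {p q : ℝ} (hp : 0 ≤ p) (hpq : p ≤ q) : AW C W p ≤ AW C W q := by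
  unfold AW
  gcongr

end BinaryCode

theorem BEC_upper_general (N : ℕ) (C : Submodule (ZMod 2) (Pattern N))
    (εstar : ℝ) (hεstar : εstar < 1) (hhalf : Pmap C εstar ≤ 1 / 2)
    (W : ℕ) (ε : ℝ) (hε0 : 0 < ε) (hε : ε ≤ εstar) :
    Pmap C ε ≤
      Phi (Real.sqrt W * (Real.sqrt (-Real.log εstar) - Real.sqrt (-Real.log ε)))
        + 2 * Real.sqrt (-Real.log ε) * Real.sqrt W * AW C W εstar := by
  rw [Pmap_eq_bernoulliProb] at hhalf ⊢
  refine bernoulliProb_le_thresholdBound isUpperSet_coveringFamily hεstar hhalf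
    (fun p hp ↦ ?_) ⟨hε0, hε⟩
  calc bernoulliProb univ p {t | #(pivotal (coveringFamily C) t) ∈ Set.Icc 1 W}
      ≤ _ := bernoulliProb_card_pivotal_le ⟨hp.1.le, hp.2.trans hεstar.le⟩ W
    _ = AW C W p := sum_pow_card_codewordSupport_eq_AW C W p
    _ ≤ AW C W εstar := AW_le_AW C W hp.1.le hp.2

theorem BEC_upper (N : ℕ) (C : Submodule (ZMod 2) (Pattern N))
    (εstar : ℝ) (hεstar : εstar ∈ Set.Ioo (0 : ℝ) 1)
    (hhalf : Pmap C εstar = 1 / 2) :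
    ∀ W : ℕ, 1 ≤ W → W ≤ N → ∀ ε : ℝ, 0 < ε → ε < εstar →
      Pmap C ε ≤
        Phi (Real.sqrt W * (Real.sqrt (-Real.log εstar) - Real.sqrt (-Real.log ε)))
          + 2 * Real.sqrt (-Real.log ε) * Real.sqrt W * AW C W εstar :=
  fun W _ _ ε hε0 hε ↦ BEC_upper_general N C εstar hεstar.2 hhalf.le W ε hε0 hε.le

end
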